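/- arXiv:1502.06467 — 2 statements merged into one kernel-verified Lean document; each statement's English description precedes it below -/
import Mathlib

section
/- Let p be a prime and let S ⊆ ℤ^m be a Presburger-definable set, i.e., definable with parameters in the first-order structure (ℤ, +, −, <, 0, 1). Then the set ord^{-1}(S) := {(x₁, …, xₘ) ∈ (ℚ_p \ {0})^m : (ord x₁, …, ord xₘ) ∈ S} is definable with parameters in the language of rings L_ring on the field ℚ_p. -/
open FirstOrder FirstOrder.Language FirstOrder.Ring

/-- Function symbols of the Presburger language: `0`, `1`, `+`, `−`. -/
inductive PresburgerFunc : ℕ → Type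
  | zero : PresburgerFunc 0
  | one : PresburgerFunc 0
  | add : PresburgerFunc 2
  | sub : PresburgerFunc 2

/-- Relation symbols of the Presburger language: `<`. -/
inductive PresburgerRel : ℕ → Type
  | lt : PresburgerRel 2

/-- The first-order language `(+, −, <, 0, 1)` of Presburger arithmetic. -/
def Presburger : FirstOrder.Language :=
  ⟨PresburgerFunc, PresburgerRel⟩

/-- The standard interpretation of `(+, −, <, 0, 1)` on `ℤ`. -/
instance : Presburger.Structure ℤ where
  funMap {_} f v :=
    match f with
    | .zero => 0
    | .one => 1
    | .add => v 0 + v 1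
    | .sub => v 0 - v 1
  RelMap {_} r v :=
    match r with
    | .lt => v 0 < v 1

theorem opr_val_add {p : ℕ} [Fact p.Prime] {a b : ℚ_[p]} (ha : a ≠ 0) (hb : b ≠ 0)
    (h : b.valuation < a.valuation) : a + b ≠ 0 ∧ (a + b).valuation = b.valuation := by
  have hab : a + b ≠ 0 := by
    intro h0
    have : a = -b := eq_neg_of_add_eq_zero_left h0
    have h1 : ‖a‖ = ‖b‖ := by rw [this, norm_neg]
    rw [Padic.norm_eq_zpow_neg_valuation ha, Padic.norm_eq_zpow_neg_valuation hb] at h1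
    have hp : (1 : ℝ) < p := by exact_mod_cast (Fact.out : p.Prime).one_lt
    have := zpow_right_injective₀ (by linarith) hp.ne' h1
    omega
  refine ⟨hab, ?_⟩
  have h1 := Padic.le_valuation_add hab
  have h2 : a + b + -a ≠ 0 := by simpa using hb
  have h3 := Padic.le_valuation_add h2
  have h4 : (-a).valuation = a.valuation := by
    have : (-1 : ℚ_[p]).valuation = 0 := by
      have h := Padic.valuation_mul (p := p) (x := -1) (y := -1) (by simp) (by simp)
      simp at h
      omega
    rw [← neg_one_mul, Padic.valuation_mul (by simp) ha, this, zero_add]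
  rw [h4] at h3
  have h5 : a + b + -a = b := by ring
  rw [h5] at h3
  omega

theorem opr_sq {p : ℕ} [Fact p.Prime] (z : ℤ_[p]) : ∃ w : ℤ_[p], w ^ 2 = 1 + p ^ 3 * z ^ 4 := by
  have hp := (Fact.out : p.Prime)
  have hp1 : (1 : ℝ) < p := by exact_mod_cast hp.one_lt
  have key : ‖(p : ℤ_[p]) ^ 3 * z ^ 4‖ < ‖(2 : ℤ_[p])‖ ^ 2 := by
    have h1 : ‖(p : ℤ_[p]) ^ 3 * z ^ 4‖ ≤ ((p : ℝ)⁻¹) ^ 3 := by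
      rw [norm_mul, norm_pow, norm_pow, PadicInt.norm_p]
      exact mul_le_of_le_one_right (by positivity) (pow_le_one₀ (norm_nonneg _) (PadicInt.norm_le_one z))
    have h2 : (p : ℝ)⁻¹ ≤ ‖(2 : ℤ_[p])‖ := by
      by_cases h : p = 2
      · subst h
        have := PadicInt.norm_p (p := 2)
        push_cast at this ⊢
        exact this.ge
      · have : ‖((2 : ℕ) : ℤ_[p])‖ = 1 := by
          rw [PadicInt.norm_natCast_eq_one_iff]
          exact (Nat.coprime_primes hp Nat.prime_two).2 h
        push_cast at this
        rw [this]
        exact inv_le_one_of_one_le₀ hp1.le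
    calc _ ≤ ((p : ℝ)⁻¹) ^ 3 := h1
      _ < ((p : ℝ)⁻¹) ^ 2 := by
        apply pow_lt_pow_right_of_lt_one₀ (by positivity) (inv_lt_one_of_one_lt₀ hp1) (by norm_num)
      _ ≤ _ := by gcongr
  generalize (p : ℤ_[p]) ^ 3 * z ^ 4 = c at key ⊢
  obtain ⟨w, hw, -⟩ := hensels_lemma (p := p) (R := ℤ_[p])
    (F := (Polynomial.X ^ 2 - Polynomial.C (1 + c))) (a := 1) (by
      simpa [one_add_one_eq_two] using key)
  refine ⟨w, ?_⟩
  simp at hw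
  linear_combination hw

theorem opr_le {p : ℕ} [Fact p.Prime] {x y : ℚ_[p]} (hx : x ≠ 0) (hy : y ≠ 0) :
    x.valuation ≤ y.valuation ↔ ∃ w, w * w = x ^ 4 + p ^ 3 * y ^ 4 := by
  have hp : (p : ℚ_[p]) ≠ 0 := by exact_mod_cast (Fact.out : p.Prime).ne_zero
  constructor
  · intro h
    have hz : ‖y / x‖ ≤ 1 := by
      rw [Padic.norm_le_one_iff_val_nonneg, div_eq_mul_inv,
        Padic.valuation_mul hy (inv_ne_zero hx), Padic.valuation_inv]
      omega
    obtain ⟨u, hu⟩ : ∃ u : ℤ_[p], (u : ℚ_[p]) = y / x := ⟨⟨y / x, hz⟩, rfl⟩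
    obtain ⟨w, hw⟩ := opr_sq u
    have hw' := congrArg (fun t : ℤ_[p] => (t : ℚ_[p])) hw
    simp [hu] at hw'
    refine ⟨w * x ^ 2, ?_⟩
    have : (w : ℚ_[p]) * x ^ 2 * (w * x ^ 2) = (w : ℚ_[p]) ^ 2 * x ^ 4 := by ring
    rw [this, hw']
    field_simp
  · rintro ⟨w, hw⟩
    by_contra! h
    have e1 : (x ^ 4).valuation = 4 * x.valuation := by simp [Padic.valuation_pow]
    have e2 : ((p : ℚ_[p]) ^ 3 * y ^ 4).valuation = 3 + 4 * y.valuation := by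
      rw [Padic.valuation_mul (pow_ne_zero _ hp) (pow_ne_zero _ hy)]
      simp [Padic.valuation_pow]
    obtain ⟨h0, h1⟩ := opr_val_add (pow_ne_zero 4 hx)
      (mul_ne_zero (pow_ne_zero 3 hp) (pow_ne_zero 4 hy)) (by rw [e1, e2]; omega)
    rw [← hw] at h0 h1
    have hw0 : w ≠ 0 := fun h => h0 (by simp [h])
    rw [Padic.valuation_mul hw0 hw0, e2] at h1
    omega

/-- The numeral term. -/
def oprNat {β : Type*} : ℕ → Language.ring.Term β
  | 0 => 0
  | n + 1 => oprNat n + 1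

section
variable {p : ℕ} [Fact p.Prime] [CompatibleRing (ℚ_[p])]

theorem opr_realize_nat {β : Type*} (n : ℕ) (v : β → ℚ_[p]) :
    (oprNat n : Language.ring.Term β).realize v = n := by
  induction n with
  | zero => simp [oprNat]
  | succ n ih => simp [oprNat, ih]

theorem opr_term {β : Type*} (t : Presburger.Term β) :
    ∃ a b : Language.ring.Term β, ∀ v : β → ℚ_[p], (∀ i, v i ≠ 0) →
      a.realize v ≠ 0 ∧ b.realize v ≠ 0 ∧
      (a.realize v).valuation - (b.realize v).valuation =
        t.realize (fun i => (v i).valuation) := by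
  have hp : (p : ℚ_[p]) ≠ 0 := by exact_mod_cast (Fact.out : p.Prime).ne_zero
  induction t with
  | var i =>
    refine ⟨Term.var i, 1, fun v hv => ?_⟩
    simp [hv i]
  | func f ts ih =>
    choose a b h using ih
    cases f with
    | zero =>
      refine ⟨1, 1, fun v hv => ?_⟩
      simp [Term.realize, Structure.funMap]
    | one =>
      refine ⟨oprNat p, 1, fun v hv => ?_⟩
      simp [Term.realize, Structure.funMap, opr_realize_nat, hp]
    | add =>
      refine ⟨a 0 * a 1, b 0 * b 1, fun v hv => ?_⟩
      obtain ⟨h1, h2, h3⟩ := h 0 v hv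
      obtain ⟨k1, k2, k3⟩ := h 1 v hv
      refine ⟨by simp [h1, k1], by simp [h2, k2], ?_⟩
      simp only [realize_mul, Padic.valuation_mul h1 k1, Padic.valuation_mul h2 k2]
      simp only [Term.realize, Structure.funMap]
      rw [← h3, ← k3]
      ring
    | sub =>
      refine ⟨a 0 * b 1, b 0 * a 1, fun v hv => ?_⟩
      obtain ⟨h1, h2, h3⟩ := h 0 v hv
      obtain ⟨k1, k2, k3⟩ := h 1 v hv
      refine ⟨by simp [h1, k2], by simp [h2, k1], ?_⟩
      simp only [realize_mul, Padic.valuation_mul h1 k2, Padic.valuation_mul h2 k1]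
      simp only [Term.realize, Structure.funMap]
      rw [← h3, ← k3]
      ring

theorem opr_le_formula {α : Type*} {n : ℕ} (s t : Presburger.Term (α ⊕ Fin n)) :
    ∃ ψ : Language.ring.BoundedFormula α n, ∀ (v : α → ℚ_[p]) (xs : Fin n → ℚ_[p]),
      (∀ i, v i ≠ 0) → (∀ i, xs i ≠ 0) →
      (ψ.Realize v xs ↔
        s.realize (Sum.elim (fun i => (v i).valuation) (fun i => (xs i).valuation)) ≤
        t.realize (Sum.elim (fun i => (v i).valuation) (fun i => (xs i).valuation))) := by
  obtain ⟨a, b, h⟩ := opr_term (p := p) s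
  obtain ⟨c, d, k⟩ := opr_term (p := p) t
  let l : Language.ring.Term (α ⊕ Fin n) → Language.ring.Term (α ⊕ Fin (n + 1)) :=
    fun t => t.relabel (Sum.map id Fin.castSucc)
  let w : Language.ring.Term (α ⊕ Fin (n + 1)) := Term.var (Sum.inr (Fin.last n))
  let x := l (a * d)
  let y := l (c * b)
  let q : Language.ring.Term (α ⊕ Fin (n + 1)) := oprNat p
  refine ⟨(Term.bdEqual (w * w) (x * x * x * x + q * q * q * (y * y * y * y))).ex,
    fun v xs hv hxs => ?_⟩
  have hall : ∀ i, (Sum.elim v xs) i ≠ 0 := by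
    rintro (i | i)
    · exact hv i
    · exact hxs i
  have e : (fun i => (Sum.elim v xs i).valuation) =
      Sum.elim (fun i => (v i).valuation) (fun i => (xs i).valuation) := by
    ext i
    cases i <;> rfl
  obtain ⟨h1, h2, h3⟩ := h _ hall
  obtain ⟨k1, k2, k3⟩ := k _ hall
  rw [e] at h3 k3
  rw [← h3, ← k3]
  have := opr_le (mul_ne_zero h1 k2) (mul_ne_zero k1 h2)
  rw [Padic.valuation_mul h1 k2, Padic.valuation_mul k1 h2] at this
  have e2 : ∀ z, Sum.elim v (Fin.snoc xs z : Fin (n + 1) → ℚ_[p]) ∘ Sum.map id Fin.castSucc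
      = Sum.elim v xs := by
    intro z
    ext i
    cases i <;> simp
  have hl : ∀ u z, (l u).realize (Sum.elim v (Fin.snoc xs z : Fin (n + 1) → ℚ_[p])) =
      u.realize (Sum.elim v xs) := by
    intro u z
    simp only [l, Term.realize_relabel, e2]
  rw [BoundedFormula.realize_ex]
  simp only [BoundedFormula.realize_bdEqual, realize_mul, realize_add, x, y, q, w, hl,
    opr_realize_nat, Term.realize_var, Sum.elim_inr, Fin.snoc_last]
  rw [show ∀ a b c d : ℤ, (a - b ≤ c - d ↔ a + d ≤ c + b) from fun a b c d => by omega, this]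
  refine exists_congr fun z => ?_
  rw [show ∀ s t q : ℚ_[p], s * s * s * s + q * q * q * (t * t * t * t) = s ^ 4 + q ^ 3 * t ^ 4
    from fun s t q => by ring]

theorem opr_formula {α : Type*} {n : ℕ} (φ : Presburger.BoundedFormula α n) :
    ∃ ψ : Language.ring.BoundedFormula α n, ∀ (v : α → ℚ_[p]) (xs : Fin n → ℚ_[p]),
      (∀ i, v i ≠ 0) → (∀ i, xs i ≠ 0) →
      (ψ.Realize v xs ↔
        φ.Realize (fun i => (v i).valuation) (fun i => (xs i).valuation)) := by
  have hp : (p : ℚ_[p]) ≠ 0 := by exact_mod_cast (Fact.out : p.Prime).ne_zero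
  induction φ with
  | falsum => exact ⟨⊥, fun v xs _ _ => Iff.rfl⟩
  | equal s t =>
    obtain ⟨a, ha⟩ := opr_le_formula (p := p) s t
    obtain ⟨b, hb⟩ := opr_le_formula (p := p) t s
    refine ⟨a ⊓ b, fun v xs hv hxs => ?_⟩
    rw [BoundedFormula.realize_inf, ha v xs hv hxs, hb v xs hv hxs]
    exact le_antisymm_iff.symm
  | rel R ts =>
    cases R with
    | lt =>
      obtain ⟨b, hb⟩ := opr_le_formula (p := p) (ts 1) (ts 0)
      refine ⟨b.not, fun v xs hv hxs => ?_⟩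
      rw [BoundedFormula.realize_not, hb v xs hv hxs, not_le]
      rfl
  | imp f g hf hg =>
    obtain ⟨a, ha⟩ := hf
    obtain ⟨b, hb⟩ := hg
    refine ⟨a.imp b, fun v xs hv hxs => ?_⟩
    rw [BoundedFormula.realize_imp, BoundedFormula.realize_imp, ha v xs hv hxs, hb v xs hv hxs]
  | @all n f hf =>
    obtain ⟨a, ha⟩ := hf
    refine ⟨(((Term.bdEqual (Term.var (Sum.inr (Fin.last n))) 0).not).imp a).all,
      fun v xs hv hxs => ?_⟩
    have hs : ∀ z : ℚ_[p], z ≠ 0 → ∀ i, (Fin.snoc xs z : Fin (n + 1) → ℚ_[p]) i ≠ 0 := by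
      intro z hz i
      refine Fin.lastCases ?_ (fun i => ?_) i
      · simpa using hz
      · simpa using hxs i
    have hv2 : ∀ z : ℚ_[p], (fun i => ((Fin.snoc xs z : Fin (n + 1) → ℚ_[p]) i).valuation) =
        Fin.snoc (fun i => (xs i).valuation) z.valuation := by
      intro z
      ext i
      refine Fin.lastCases ?_ (fun i => ?_) i <;> simp
    rw [BoundedFormula.realize_all, BoundedFormula.realize_all]
    simp only [BoundedFormula.realize_imp, BoundedFormula.realize_not,
      BoundedFormula.realize_bdEqual, Term.realize_var, Sum.elim_inr, Fin.snoc_last, realize_zero]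
    constructor
    · intro h k
      have hz : (p : ℚ_[p]) ^ k ≠ 0 := zpow_ne_zero _ hp
      have := (ha v _ hv (hs _ hz)).1 (h _ hz)
      rw [hv2] at this
      simpa [Padic.valuation_zpow] using this
    · intro h z hz
      rw [ha v _ hv (hs _ hz), hv2]
      exact h _

end

/-- For every Presburger-definable `S ⊆ ℤ^m`, the set
`ord⁻¹(S) = {x ∈ (ℚ_p \ {0})^m : (ord x₁, …, ord xₘ) ∈ S}` is definable with parameters in the
language of rings on `ℚ_p`. -/
theorem ord_preimage_ring_definable (p : ℕ) [Fact p.Prime] (m : ℕ)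
    (S : Set (Fin m → ℤ)) (hS : (Set.univ : Set ℤ).Definable Presburger S) :
    letI : Language.ring.Structure ℚ_[p] := (compatibleRingOfRing ℚ_[p]).toStructure
    (Set.univ : Set ℚ_[p]).Definable Language.ring
      {x : Fin m → ℚ_[p] | (∀ i, x i ≠ 0) ∧ (fun i => (x i).valuation) ∈ S} := by
  let : CompatibleRing ℚ_[p] := compatibleRingOfRing ℚ_[p]
  have hp : (p : ℚ_[p]) ≠ 0 := by exact_mod_cast (Fact.out : p.Prime).ne_zero
  rw [Set.definable_iff_exists_formula_sum] at hS
  obtain ⟨φ, rfl⟩ := hS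
  obtain ⟨ψ, hψ⟩ := opr_formula (p := p) φ
  change (Set.univ : Set ℚ_[p]).Definable Language.ring _
  rw [Set.definable_iff_exists_formula_sum]
  let g : (Set.univ : Set ℤ) ⊕ Fin m → (Set.univ : Set ℚ_[p]) ⊕ Fin m :=
    Sum.map (fun c => ⟨(p : ℚ_[p]) ^ (c : ℤ), trivial⟩) id
  let N : Language.ring.Formula ((Set.univ : Set ℚ_[p]) ⊕ Fin m) :=
    BoundedFormula.iInf (fun i : Fin m => (Term.equal (Term.var (Sum.inr i)) 0).not)
  refine ⟨N ⊓ Formula.relabel g ψ, ?_⟩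
  ext x
  have hN : N.Realize (Sum.elim (fun c : (Set.univ : Set ℚ_[p]) => (c : ℚ_[p])) x) ↔
      ∀ i, x i ≠ 0 := by
    simp [N, Formula.Realize, Term.equal]
  simp only [Set.mem_ofPred_eq, Formula.realize_inf, Formula.realize_relabel]
  rw [hN]
  refine and_congr_right fun hx => ?_
  have hall : ∀ i, (Sum.elim (fun c : (Set.univ : Set ℚ_[p]) => (c : ℚ_[p])) x ∘ g) i ≠ 0 := by
    rintro (c | i)
    · exact zpow_ne_zero _ hp
    · exact hx i
  have := hψ _ default hall (fun i => i.elim0)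
  have e : (fun i => ((Sum.elim (fun c : (Set.univ : Set ℚ_[p]) => (c : ℚ_[p])) x ∘ g) i).valuation)
      = Sum.elim (fun c : (Set.univ : Set ℤ) => (c : ℤ)) (fun i => (x i).valuation) := by
    ext i
    rcases i with c | i
    · simp [g, Padic.valuation_zpow]
    · rfl
  rw [e] at this
  unfold Formula.Realize
  convert this.symm
end

section
/- Let p be a prime and let μ be the Haar measure on (ℚ_p, +) normalized so that μ(ℤ_p) = 1. Let a, b, k ∈ ℤ with a ≤ b, let N ≥ 1 and M ≥ 1 be integers, and let ξ ∈ (ℤ/p^M ℤ)^× be a unit. Let k₀ be the least integer n with n ≥ a and n ≡ k (mod N), and let k₁ be the least integer n with n ≥ b and n ≡ k (mod N). Then the set {x ∈ ℚ_p : x ≠ 0, a ≤ ord(x) < b, ord(x) ≡ k (mod N), ac_M(x) = ξ} has μ-measure p^{−M}·(p^{−k₀} − p^{−k₁}) / (1 − p^{−N}). -/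
open MeasureTheory
open scoped Classical

/-- The `M`-th angular component `ac_M : ℚ_p \ {0} → (ℤ/p^M ℤ)ˣ ⊆ ℤ/p^M ℤ`: for `x ≠ 0` with
`ord x = v`, write `x = p^v · u` with `u ∈ ℤ_pˣ`; then `ac_M x = u mod p^M` (and `ac_M 0 = 0`). -/
noncomputable def angularComponent (p : ℕ) [Fact p.Prime] (M : ℕ) (x : ℚ_[p]) : ZMod (p ^ M) :=
  if hx : x = 0 then 0
  else
    PadicInt.toZModPow M
      ⟨x * (p : ℚ_[p]) ^ (-x.valuation), le_of_eq <| by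
        rw [norm_mul, Padic.norm_eq_zpow_neg_valuation hx, Padic.norm_p_zpow, neg_neg,
          ← zpow_add₀ (by exact_mod_cast (Fact.out : p.Prime).ne_zero : (p : ℝ) ≠ 0),
          neg_add_cancel, zpow_zero]⟩

lemma aux_ball_translate (p : ℕ) [Fact p.Prime]
    [MeasurableSpace ℚ_[p] ] [BorelSpace ℚ_[p] ]
    (μ : Measure ℚ_[p]) [μ.IsAddHaarMeasure] (c : ℚ_[p]) (r : ℝ) :
    μ (Metric.closedBall c r) = μ (Metric.closedBall 0 r) :=
  Measure.addHaar_closedBall_center μ c r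

lemma aux_ball_split (p : ℕ) [hp : Fact p.Prime] (n : ℤ) :
    Metric.closedBall (0 : ℚ_[p]) ((p : ℝ) ^ (-n)) =
      ⋃ i ∈ Finset.range p,
        Metric.closedBall ((i : ℚ_[p]) * (p : ℚ_[p]) ^ n) ((p : ℝ) ^ (-(n + 1))) := by
  have hp0 : (p : ℝ) ≠ 0 := by exact_mod_cast hp.out.ne_zero
  have hpq : (p : ℚ_[p]) ≠ 0 := by exact_mod_cast hp.out.ne_zero
  have hp1 : (1 : ℝ) ≤ p := by exact_mod_cast hp.out.one_lt.le
  have hpos : (0 : ℝ) < (p : ℝ) ^ (-n) := zpow_pos (by linarith) _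
  ext x
  simp only [Metric.mem_closedBall, dist_eq_norm, sub_zero, Set.mem_iUnion, Finset.mem_range,
    exists_prop]
  constructor
  · intro hx
    have hy : ‖x * (p : ℚ_[p]) ^ (-n)‖ ≤ 1 := by
      rw [norm_mul, Padic.norm_p_zpow, neg_neg]
      calc ‖x‖ * (p : ℝ) ^ n ≤ (p : ℝ) ^ (-n) * (p : ℝ) ^ n := by gcongr
        _ = 1 := by rw [← zpow_add₀ hp0]; simp
    obtain ⟨y, hyx⟩ : ∃ y : ℤ_[p], (y : ℚ_[p]) = x * (p : ℚ_[p]) ^ (-n) := ⟨⟨_, hy⟩, rfl⟩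
    refine ⟨PadicInt.zmodRepr y, PadicInt.zmodRepr_lt_p _, ?_⟩
    have h := PadicInt.norm_sub_zmodRepr_lt_one y
    set i := PadicInt.zmodRepr y
    rw [PadicInt.norm_def, PadicInt.coe_sub, PadicInt.coe_natCast, hyx] at h
    have e : x - (i : ℚ_[p]) * (p : ℚ_[p]) ^ n =
        (x * (p : ℚ_[p]) ^ (-n) - i) * (p : ℚ_[p]) ^ n := by
      rw [sub_mul, mul_assoc, ← zpow_add₀ hpq]; simp
    rw [Padic.norm_le_pow_iff_norm_lt_pow_add_one]
    rw [e, norm_mul, Padic.norm_p_zpow, show -(n + 1) + 1 = -n by ring]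
    calc _ < 1 * (p : ℝ) ^ (-n) := mul_lt_mul_of_pos_right h hpos
      _ = _ := one_mul _
  · rintro ⟨i, hi, h⟩
    have e : x = (x - (i : ℚ_[p]) * (p : ℚ_[p]) ^ n) + (i : ℚ_[p]) * (p : ℚ_[p]) ^ n := by ring
    rw [e]
    refine (Padic.nonarchimedean _ _).trans (max_le ?_ ?_)
    · refine h.trans (zpow_le_zpow_right₀ hp1 (by omega))
    · rw [norm_mul, Padic.norm_p_zpow]
      have : ‖(i : ℚ_[p])‖ ≤ 1 := by exact_mod_cast Padic.norm_int_le_one (p := p) (i : ℤ)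
      calc _ ≤ 1 * (p : ℝ) ^ (-n) := by gcongr
        _ = _ := one_mul _

lemma aux_ball_disj (p : ℕ) [hp : Fact p.Prime] (n : ℤ) :
    Set.PairwiseDisjoint (Finset.range p : Set ℕ) (fun i : ℕ =>
        Metric.closedBall ((i : ℚ_[p]) * (p : ℚ_[p]) ^ n) ((p : ℝ) ^ (-(n + 1)))) := by
  have hp0 : (p : ℝ) ≠ 0 := by exact_mod_cast hp.out.ne_zero
  have hp1 : (1 : ℝ) < p := by exact_mod_cast hp.out.one_lt
  have hpos : (0 : ℝ) < (p : ℝ) ^ (-n) := zpow_pos (by linarith) _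
  intro i hi j hj hij
  rw [Function.onFun, Set.disjoint_left]
  intro x h1 h2
  apply hij
  simp only [Metric.mem_closedBall, dist_eq_norm] at h1 h2
  simp only [Finset.coe_range, Set.mem_Iio] at hi hj
  have h3 : ‖(((i : ℤ) - (j : ℤ) : ℤ) : ℚ_[p]) * (p : ℚ_[p]) ^ n‖ ≤ (p : ℝ) ^ (-(n + 1)) := by
    have e : (((i : ℤ) - (j : ℤ) : ℤ) : ℚ_[p]) * (p : ℚ_[p]) ^ n =
      (x - (j : ℚ_[p]) * (p : ℚ_[p]) ^ n) + -(x - (i : ℚ_[p]) * (p : ℚ_[p]) ^ n) := by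
      push_cast; ring
    rw [e]
    exact (Padic.nonarchimedean _ _).trans (max_le h2 (by rwa [norm_neg]))
  have h4 : ‖(((i : ℤ) - (j : ℤ) : ℤ) : ℚ_[p])‖ < 1 := by
    rw [norm_mul, Padic.norm_p_zpow] at h3
    have h5 : (p : ℝ) ^ (-(n + 1)) < (p : ℝ) ^ (-n) := zpow_lt_zpow_right₀ hp1 (by omega)
    by_contra hc
    push Not at hc
    nlinarith
  rw [Padic.norm_intCast_lt_one_iff] at h4
  have := Int.eq_zero_of_abs_lt_dvd h4 (by rw [abs_lt]; omega)
  omega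

lemma aux_ball_step (p : ℕ) [hp : Fact p.Prime]
    [MeasurableSpace ℚ_[p] ] [BorelSpace ℚ_[p] ]
    (μ : Measure ℚ_[p]) [μ.IsAddHaarMeasure] (n : ℤ) :
    μ (Metric.closedBall 0 ((p : ℝ) ^ (-n))) =
      p * μ (Metric.closedBall 0 ((p : ℝ) ^ (-(n + 1)))) := by
  rw [aux_ball_split, measure_biUnion_finset (aux_ball_disj p n)
    (fun i _ => Metric.isClosed_closedBall.measurableSet)]
  simp [aux_ball_translate p μ (_ * _)]

lemma aux_ball (p : ℕ) [hp : Fact p.Prime]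
    [MeasurableSpace ℚ_[p] ] [BorelSpace ℚ_[p] ]
    (μ : Measure ℚ_[p]) [μ.IsAddHaarMeasure] (hμ : μ {x : ℚ_[p] | ‖x‖ ≤ 1} = 1) (n : ℤ) :
    μ (Metric.closedBall 0 ((p : ℝ) ^ (-n))) = ENNReal.ofReal ((p : ℝ) ^ (-n)) := by
  have hp0 : (p : ℝ) ≠ 0 := by exact_mod_cast hp.out.ne_zero
  have key : ∀ n : ℤ, ENNReal.ofReal ((p : ℝ) ^ (-n)) =
      p * ENNReal.ofReal ((p : ℝ) ^ (-(n + 1))) := by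
    intro n
    rw [← ENNReal.ofReal_natCast, ← ENNReal.ofReal_mul (by positivity), ← zpow_one_add₀ hp0]
    congr 2; ring
  induction n using Int.induction_on with
  | zero =>
    rw [show Metric.closedBall (0 : ℚ_[p]) ((p : ℝ) ^ (-(0 : ℤ))) = {x : ℚ_[p] | ‖x‖ ≤ 1} by
      ext x; simp, hμ]
    simp
  | succ i ih =>
    rw [aux_ball_step, key] at ih
    exact (ENNReal.mul_right_inj (by exact_mod_cast hp.out.ne_zero)
      (ENNReal.natCast_ne_top p)).1 ih
  | pred i ih =>
    rw [aux_ball_step, key, sub_add_cancel, ih]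

lemma aux_slice (p : ℕ) [hp : Fact p.Prime] (M : ℕ) (hM : 1 ≤ M) (ξ : (ZMod (p ^ M))ˣ) :
    ∃ u : ℚ_[p], ∀ n : ℤ,
      {x : ℚ_[p] | x ≠ 0 ∧ x.valuation = n ∧ angularComponent p M x = (ξ : ZMod (p ^ M))} =
      Metric.closedBall (u * (p : ℚ_[p]) ^ n) ((p : ℝ) ^ (-(n + M))) := by
  have hp0 : (p : ℝ) ≠ 0 := by exact_mod_cast hp.out.ne_zero
  have hpq : (p : ℚ_[p]) ≠ 0 := by exact_mod_cast hp.out.ne_zero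
  have hp1 : (1 : ℝ) < p := by exact_mod_cast hp.out.one_lt
  obtain ⟨u, hu⟩ : ∃ u : ℤ_[p], PadicInt.toZModPow M u = (ξ : ZMod (p ^ M)) :=
    ZMod.ringHom_surjective (PadicInt.toZModPow M) _
  have hu1 : ‖u‖ = 1 := by
    by_contra hne
    have hlt : ‖u‖ < 1 := lt_of_le_of_ne u.2 hne
    rw [PadicInt.norm_lt_one_iff_dvd] at hlt
    obtain ⟨v, rfl⟩ := hlt
    have h1 : IsUnit ((p : ZMod (p ^ M))) := by
      have := ξ.isUnit
      rw [← hu, map_mul, map_natCast] at this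
      exact isUnit_of_mul_isUnit_left this
    rw [ZMod.isUnit_iff_coprime] at h1
    have := Nat.Coprime.eq_one_of_dvd h1 (dvd_pow_self p (by omega))
    exact hp.out.one_lt.ne' this
  have hiff : ∀ y : ℤ_[p], PadicInt.toZModPow M y = (ξ : ZMod (p ^ M)) ↔
      ‖(y : ℚ_[p]) - u‖ ≤ (p : ℝ) ^ (-(M : ℤ)) := by
    intro y
    rw [← hu, ← sub_eq_zero, ← map_sub, ← RingHom.mem_ker, PadicInt.ker_toZModPow,
      ← PadicInt.norm_le_pow_iff_mem_span_pow, PadicInt.norm_def, PadicInt.coe_sub]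
  have hscale : ∀ (x : ℚ_[p]) (n : ℤ), ‖x - u * (p : ℚ_[p]) ^ n‖ ≤ (p : ℝ) ^ (-(n + M)) ↔
      ‖x * (p : ℚ_[p]) ^ (-n) - u‖ ≤ (p : ℝ) ^ (-(M : ℤ)) := by
    intro x n
    have e : x - u * (p : ℚ_[p]) ^ n = (x * (p : ℚ_[p]) ^ (-n) - u) * (p : ℚ_[p]) ^ n := by
      rw [sub_mul, mul_assoc, ← zpow_add₀ hpq]; simp
    rw [e, norm_mul, Padic.norm_p_zpow, neg_add, add_comm, zpow_add₀ hp0]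
    exact mul_le_mul_iff_left₀ (zpow_pos (by linarith) _)
  refine ⟨u, fun n => ?_⟩
  ext x
  simp only [Set.mem_ofPred_eq, Metric.mem_closedBall, dist_eq_norm]
  rw [hscale]
  constructor
  · rintro ⟨hx, rfl, h⟩
    rw [angularComponent, dif_neg hx] at h
    exact (hiff _).1 h
  · intro h
    have hlt : (p : ℝ) ^ (-(M : ℤ)) < 1 := zpow_lt_one_of_neg₀ hp1 (by omega)
    have hn1 : ‖x * (p : ℚ_[p]) ^ (-n)‖ = 1 := by
      have h2 : ‖x * (p : ℚ_[p]) ^ (-n) + -(u : ℚ_[p])‖ < ‖-(u : ℚ_[p])‖ := by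
        rw [norm_neg, ← PadicInt.norm_def, hu1, ← sub_eq_add_neg]
        exact h.trans_lt hlt
      rw [Padic.norm_eq_of_norm_add_lt_right h2, norm_neg, ← PadicInt.norm_def, hu1]
    have hx : x ≠ 0 := by
      rintro rfl
      simp at hn1
    have hv : x.valuation = n := by
      rw [norm_mul, Padic.norm_p_zpow, Padic.norm_eq_zpow_neg_valuation hx,
        ← zpow_add₀ hp0, zpow_eq_one_iff_right₀ (by positivity) hp1.ne'] at hn1
      omega
    refine ⟨hx, hv, ?_⟩
    subst hv
    rw [angularComponent, dif_neg hx]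
    exact (hiff _).2 h

/-- For the Haar measure `μ` on `ℚ_p` normalized so that `μ(ℤ_p) = 1`, if `k₀` (resp. `k₁`) is
the least integer `≥ a` (resp. `≥ b`) congruent to `k mod N`, then the set of `x ∈ ℚ_p` with
`a ≤ ord x < b`, `ord x ≡ k (mod N)` and `ac_M x = ξ` has measure
`p^{-M}·(p^{-k₀} - p^{-k₁}) / (1 - p^{-N})`. -/
theorem measure_ord_between_and_mod_and_angularComponent_eq (p : ℕ) [Fact p.Prime]
    [MeasurableSpace ℚ_[p] ] [BorelSpace ℚ_[p] ]
    (μ : Measure ℚ_[p]) [μ.IsAddHaarMeasure] (hμ : μ {x : ℚ_[p] | ‖x‖ ≤ 1} = 1)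
    (a b k : ℤ) (hab : a ≤ b) (N M : ℕ) (hN : 1 ≤ N) (hM : 1 ≤ M) (ξ : (ZMod (p ^ M))ˣ)
    (k₀ : ℤ) (hk₀ : IsLeast {n : ℤ | a ≤ n ∧ n ≡ k [ZMOD (N : ℤ)]} k₀)
    (k₁ : ℤ) (hk₁ : IsLeast {n : ℤ | b ≤ n ∧ n ≡ k [ZMOD (N : ℤ)]} k₁) :
    μ {x : ℚ_[p] | x ≠ 0 ∧ a ≤ x.valuation ∧ x.valuation < b ∧
        x.valuation ≡ k [ZMOD (N : ℤ)] ∧ angularComponent p M x = (ξ : ZMod (p ^ M))} =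
      (p : ENNReal) ^ (-(M : ℤ)) *
        ((p : ENNReal) ^ (-k₀) - (p : ENNReal) ^ (-k₁)) / (1 - (p : ENNReal) ^ (-(N : ℤ))) := by
  have hpr : p.Prime := Fact.out
  have hp0 : (p : ℝ) ≠ 0 := by exact_mod_cast hpr.ne_zero
  have hp1 : (1 : ℝ) < p := by exact_mod_cast hpr.one_lt
  obtain ⟨u, hu⟩ := aux_slice p M hM ξ
  obtain ⟨⟨ha, hk0⟩, hmin0⟩ := hk₀
  obtain ⟨⟨hb, hk1⟩, hmin1⟩ := hk₁
  have hle : k₀ ≤ k₁ := hmin0 ⟨hab.trans hb, hk1⟩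
  have hN' : (0 : ℤ) < N := by omega
  obtain ⟨m', hm'⟩ := (hk0.trans hk1.symm).dvd
  have hm0 : 0 ≤ m' := by
    by_contra hc
    push Not at hc
    nlinarith
  obtain ⟨m, rfl⟩ := Int.eq_ofNat_of_zero_le hm0
  have hval : ∀ n : ℤ, (a ≤ n ∧ n < b ∧ n ≡ k [ZMOD (N : ℤ)]) ↔
      ∃ j ∈ Finset.range m, n = k₀ + N * (j : ℤ) := by
    intro n
    constructor
    · rintro ⟨h1, h2, h3⟩
      have h4 : k₀ ≤ n := hmin0 ⟨h1, h3⟩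
      obtain ⟨j', hj'⟩ := (hk0.trans h3.symm).dvd
      have hj0 : 0 ≤ j' := by
        by_contra hc
        push Not at hc
        nlinarith
      obtain ⟨j, rfl⟩ := Int.eq_ofNat_of_zero_le hj0
      refine ⟨j, ?_, by linarith⟩
      rw [Finset.mem_range]
      have : (N : ℤ) * j < N * m := by linarith
      exact_mod_cast lt_of_mul_lt_mul_left this hN'.le
    · rintro ⟨j, hj, rfl⟩
      rw [Finset.mem_range] at hj
      have hmod : k₀ + N * (j : ℤ) ≡ k [ZMOD (N : ℤ)] := by
        refine Int.ModEq.trans ?_ hk0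
        simp [Int.ModEq]
      refine ⟨by nlinarith, ?_, hmod⟩
      by_contra hc
      push Not at hc
      have h1 : k₁ ≤ k₀ + N * (j : ℤ) := hmin1 ⟨hc, hmod⟩
      have h2 : (j : ℤ) < m := by exact_mod_cast hj
      nlinarith
  have hset : {x : ℚ_[p] | x ≠ 0 ∧ a ≤ x.valuation ∧ x.valuation < b ∧
        x.valuation ≡ k [ZMOD (N : ℤ)] ∧ angularComponent p M x = (ξ : ZMod (p ^ M))} =
      ⋃ j ∈ Finset.range m, {x : ℚ_[p] | x ≠ 0 ∧ x.valuation = k₀ + N * (j : ℤ) ∧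
        angularComponent p M x = (ξ : ZMod (p ^ M))} := by
    ext x
    have := hval x.valuation
    simp only [Set.mem_ofPred_eq, Set.mem_iUnion, exists_prop]
    constructor
    · rintro ⟨h1, h2, h3, h4, h5⟩
      obtain ⟨j, hj, hj'⟩ := this.1 ⟨h2, h3, h4⟩
      exact ⟨j, hj, h1, hj', h5⟩
    · rintro ⟨j, hj, h1, hj', h5⟩
      obtain ⟨h2, h3, h4⟩ := this.2 ⟨j, hj, hj'⟩
      exact ⟨h1, h2, h3, h4, h5⟩
  rw [hset, measure_biUnion_finset]
  rotate_left
  · intro i _ j _ hij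
    rw [Function.onFun, Set.disjoint_left]
    rintro x ⟨_, h1, _⟩ ⟨_, h2, _⟩
    apply hij
    have : (N : ℤ) * i = N * j := by linarith
    exact_mod_cast mul_left_cancel₀ hN'.ne' this
  · intro j _
    rw [hu]
    exact Metric.isClosed_closedBall.measurableSet
  have hz : ∀ z : ℤ, (p : ENNReal) ^ z = ENNReal.ofReal ((p : ℝ) ^ z) := by
    intro z
    have hpE : (p : ENNReal) = ENNReal.ofReal (p : ℝ) := (ENNReal.ofReal_natCast p).symm
    cases z with
    | ofNat n =>
      rw [Int.ofNat_eq_natCast, zpow_natCast, zpow_natCast, ENNReal.ofReal_pow (by linarith), hpE]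
    | negSucc n =>
      rw [zpow_negSucc, zpow_negSucc, ENNReal.ofReal_inv_of_pos (by positivity),
        ENNReal.ofReal_pow (by linarith), hpE]
  have hlt : (p : ℝ) ^ (-(N : ℤ)) < 1 := zpow_lt_one_of_neg₀ hp1 (by omega)
  simp only [hu, aux_ball_translate p μ (_ * _), aux_ball p μ hμ, hz]
  rw [← ENNReal.ofReal_sum_of_nonneg (fun i _ => by positivity),
    ← ENNReal.ofReal_sub _ (by positivity), ← ENNReal.ofReal_mul (by positivity),
    ← ENNReal.ofReal_one, ← ENNReal.ofReal_sub _ (by positivity),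
    ← ENNReal.ofReal_div_of_pos (by linarith)]
  congr 1
  rw [eq_div_iff (by linarith)]
  have hterm : ∀ j : ℕ, (p : ℝ) ^ (-(k₀ + N * (j : ℤ) + M)) =
      (p : ℝ) ^ (-(M : ℤ)) * (p : ℝ) ^ (-k₀) * ((p : ℝ) ^ (-(N : ℤ))) ^ j := by
    intro j
    rw [← zpow_natCast, ← zpow_mul, ← zpow_add₀ hp0, ← zpow_add₀ hp0]
    congr 1; ring
  have hk1' : (p : ℝ) ^ (-k₁) = (p : ℝ) ^ (-k₀) * ((p : ℝ) ^ (-(N : ℤ))) ^ m := by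
    rw [← zpow_natCast, ← zpow_mul, ← zpow_add₀ hp0]
    congr 1; linarith
  simp only [hterm]
  rw [← Finset.mul_sum, mul_assoc, geom_sum_mul_neg, hk1']
  ring
end
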